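/- (Strong forward integrity for P1.) If L ∈ valid A n B, Suc i < len L and repl(L, Suc i, M) ∈ valid A n B, then M = ith(L, Suc i); i.e. no offer of a valid chain, except the last one, can be replaced by a different message while keeping the chain valid. -/

import Mathlib

inductive agent : Type
  | Server : agent
  | Friend : ℕ → agent
  | Spy : agent
deriving DecidableEq

inductive msg : Type
  | Agent : agent → msg
  | Number : ℕ → msg
  | Nonce : ℕ → msg
  | Key : ℕ → msg
  | Hash : msg → msg
  | MPair : msg → msg → msg
  | Crypt : ℕ → msg → msg
deriving DecidableEq

inductive partsP (H : Set msg) : msg → Prop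
  | Inj : ∀ X, X ∈ H → partsP H X
  | Fst : ∀ X Y, partsP H (msg.MPair X Y) → partsP H X
  | Snd : ∀ X Y, partsP H (msg.MPair X Y) → partsP H Y
  | Body : ∀ K X, partsP H (msg.Crypt K X) → partsP H X

/-- `parts H`: sub-components of messages of `H`. -/
def parts (H : Set msg) : Set msg := {X | partsP H X}

inductive analzP (invKey : ℕ → ℕ) (H : Set msg) : msg → Prop
  | Inj : ∀ X, X ∈ H → analzP invKey H X
  | Fst : ∀ X Y, analzP invKey H (msg.MPair X Y) → analzP invKey H X
  | Snd : ∀ X Y, analzP invKey H (msg.MPair X Y) → analzP invKey H Y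
  | Decrypt : ∀ K X, analzP invKey H (msg.Crypt K X) →
      analzP invKey H (msg.Key (invKey K)) → analzP invKey H X

/-- `analz invKey H`: what can be obtained by decomposing and decrypting messages of `H`. -/
def analz (invKey : ℕ → ℕ) (H : Set msg) : Set msg := {X | analzP invKey H X}

inductive synthP (H : Set msg) : msg → Prop
  | Inj : ∀ X, X ∈ H → synthP H X
  | Ag : ∀ a, synthP H (msg.Agent a)
  | Num : ∀ n, synthP H (msg.Number n)
  | Hsh : ∀ X, synthP H X → synthP H (msg.Hash X)
  | Pr : ∀ X Y, synthP H X → synthP H Y → synthP H (msg.MPair X Y)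
  | Cry : ∀ K X, synthP H X → msg.Key K ∈ H → synthP H (msg.Crypt K X)

/-- `synth H`: messages that can be synthesized from `H`. -/
def synth (H : Set msg) : Set msg := {X | synthP H X}

inductive guardP (invKey : ℕ → ℕ) (n : ℕ) (Ks : Set ℕ) : msg → Prop
  | No_Nonce : ∀ X, msg.Nonce n ∉ parts {X} → guardP invKey n Ks X
  | Guard : ∀ K X, invKey K ∈ Ks → guardP invKey n Ks (msg.Crypt K X)
  | Cry : ∀ K X, guardP invKey n Ks X → guardP invKey n Ks (msg.Crypt K X)
  | Pr : ∀ X Y, guardP invKey n Ks X → guardP invKey n Ks Y →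
      guardP invKey n Ks (msg.MPair X Y)

/-- `guard n Ks`: messages in which `Nonce n` is guarded by the keys of `Ks`. -/
def guardMsg (invKey : ℕ → ℕ) (n : ℕ) (Ks : Set ℕ) : Set msg := {X | guardP invKey n Ks X}

/-- `Guard n Ks H`: every message of `H` lies in `guard n Ks`. -/
def Guard (invKey : ℕ → ℕ) (n : ℕ) (Ks : Set ℕ) (H : Set msg) : Prop :=
  ∀ X ∈ H, X ∈ guardMsg invKey n Ks
/-- The empty encoded list: a fixed atomic message. -/
def nilm : msg := msg.Number 0

/-- Cons on encoded lists. -/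
def consm (X L : msg) : msg := msg.MPair X L

/-- Head of an encoded list. -/
def headm : msg → msg
  | msg.MPair X _ => X
  | _ => nilm

/-- Tail of an encoded list. -/
def tailm : msg → msg
  | msg.MPair _ L => L
  | _ => nilm

/-- Length of an encoded list. -/
def lenm : msg → ℕ
  | msg.MPair _ L => lenm L + 1
  | _ => 0

/-- `ith L i` is the `i+1`-th element of `L`. -/
def ith : msg → ℕ → msg
  | L, 0 => headm L
  | L, i + 1 => ith (tailm L) i

/-- `repl L i M` is `L` with its `i+1`-th element replaced by `M`. -/
def repl : msg → ℕ → msg → msg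
  | msg.MPair _ L, 0, M => msg.MPair M L
  | msg.MPair X L, i + 1, M => msg.MPair X (repl L i M)
  | L, _, _ => L

/-- `insm L i M` is `L` with `M` inserted before the `i+1`-th element of `L`. -/
def insm : msg → ℕ → msg → msg
  | L, 0, M => msg.MPair M L
  | msg.MPair X L, i + 1, M => msg.MPair X (insm L i M)
  | L, _, _ => L

/-- `trunc L i` truncates the `i` first elements of `L`. -/
def trunc : msg → ℕ → msg
  | L, 0 => L
  | msg.MPair _ L, i + 1 => trunc L i
  | L, _ => L
/-- `sign B X = ⟨Agent B, X, Crypt (priK B) (Hash X)⟩`. -/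
def sign (invKey : ℕ → ℕ) (pubK : agent → ℕ) (B : agent) (X : msg) : msg :=
  msg.MPair (msg.Agent B) (msg.MPair X (msg.Crypt (invKey (pubK B)) (msg.Hash X)))

/-- The chaining relation of protocol P1. -/
def chain (invKey : ℕ → ℕ) (pubK : agent → ℕ) (B : agent) (ofr : ℕ) (A : agent)
    (L : msg) (C : agent) : msg :=
  sign invKey pubK B (msg.MPair (msg.Crypt (pubK A) (msg.Nonce ofr))
    (msg.Hash (msg.MPair (headm L) (msg.Agent C))))

/-- The start of the chaining relation. -/
def anchor (invKey : ℕ → ℕ) (pubK : agent → ℕ) (A : agent) (n : ℕ) (B : agent) : msg :=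
  chain invKey pubK A n A (consm nilm nilm) B

/-- The signer of an offer `chain B ofr A L C`, i.e. `Agent B`. -/
def shop (M : msg) : msg := headm M

/-- The designated next server of an offer `chain B ofr A L C`, i.e. `C`. -/
def next_shop : msg → agent
  | msg.MPair _ (msg.MPair (msg.MPair _ (msg.Hash (msg.MPair _ (msg.Agent C)))) _) => C
  | _ => agent.Server
/-- Valid chains of offers for protocol P1. -/
inductive validP (invKey : ℕ → ℕ) (pubK : agent → ℕ) (A : agent) (n : ℕ) (B : agent) :
    msg → Prop
  | Req : validP invKey pubK A n B (consm (anchor invKey pubK A n B) nilm)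
  | Prop : ∀ L ofr C, validP invKey pubK A n B L →
      validP invKey pubK A n B
        (consm (chain invKey pubK (next_shop (headm L)) ofr A L C) L)

def valid (invKey : ℕ → ℕ) (pubK : agent → ℕ) (A : agent) (n : ℕ) (B : agent) : Set msg :=
  {L | validP invKey pubK A n B L}

/-!
An offer contains the hash of the offer preceding it, and hashing is injective on messages, so a
valid chain can be recovered from its most recent offer: the anchor is recognised by hashing `nilm`,
which is never an offer. Replacing an element other than the head keeps the most recent offer,
so if the result is still valid then it is the original chain.
-/

theorem headm_repl_succ (L : msg) (i : ℕ) (M : msg) : headm (repl L (i + 1) M) = headm L := by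
  cases L <;> rfl

theorem ith_repl_self (M : msg) : ∀ {L : msg} {i : ℕ}, i < lenm L → ith (repl L i M) i = M
  | .MPair _ _, 0, _ => rfl
  | .MPair _ L, i + 1, hi => ith_repl_self (L := L) (i := i) M (Nat.lt_of_succ_lt_succ hi)

section Offers

variable {invKey : ℕ → ℕ} {pubK : agent → ℕ}

theorem sign_inj {B B' : agent} {X X' : msg} :
    sign invKey pubK B X = sign invKey pubK B' X' ↔ B = B' ∧ X = X' := by
  constructor
  · intro h
    simp only [sign, msg.MPair.injEq, msg.Agent.injEq] at h
    exact ⟨h.1, h.2.1⟩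
  · rintro ⟨rfl, rfl⟩
    rfl

theorem chain_inj {B B' : agent} {ofr ofr' : ℕ} {A A' : agent} {L L' : msg} {C C' : agent} :
    chain invKey pubK B ofr A L C = chain invKey pubK B' ofr' A' L' C' ↔
      B = B' ∧ (pubK A = pubK A' ∧ ofr = ofr') ∧ headm L = headm L' ∧ C = C' := by
  simp only [chain, sign_inj, msg.MPair.injEq, msg.Crypt.injEq, msg.Nonce.injEq, msg.Hash.injEq,
    msg.Agent.injEq]

variable {A A' B B' : agent} {n n' : ℕ} {L L' : msg}

theorem anchor_ne_chain {S D C : agent} {ofr : ℕ} (hL : headm L ≠ nilm) :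
    anchor invKey pubK A n B ≠ chain invKey pubK S ofr D L C := by
  intro h
  have hnil : nilm = headm L := (chain_inj.mp h).2.2.1
  exact hL hnil.symm

theorem headm_ne_nilm_of_mem_valid (hL : L ∈ valid invKey pubK A n B) : headm L ≠ nilm := by
  cases hL <;> exact msg.noConfusion

theorem eq_of_mem_valid_of_headm_eq (hL : L ∈ valid invKey pubK A n B)
    (hL' : L' ∈ valid invKey pubK A' n' B') (hhead : headm L = headm L') : L = L' := by
  induction hL generalizing L' with
  | Req =>
    rcases hL' with _ | ⟨K', ofr', C', hK'⟩
    · exact congrArg (consm · nilm) hhead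
    · exact absurd hhead (anchor_ne_chain (headm_ne_nilm_of_mem_valid hK'))
  | _ K ofr C hK ih =>
    -- The constructor `Prop`, whose name is reserved and cannot label an alternative.
    rcases hL' with _ | ⟨K', ofr', C', hK'⟩
    · exact absurd hhead.symm (anchor_ne_chain (headm_ne_nilm_of_mem_valid hK))
    · have hpred : K = K' := ih hK' (chain_inj.mp hhead).2.2.1
      exact congrArg₂ consm hhead hpred

end Offers

/-- Strong forward integrity for P1: no offer of a valid chain, except the
last one, can be replaced by a different message while keeping the chain valid. -/
theorem strong_forward_integrity
    (invKey : ℕ → ℕ) (pubK : agent → ℕ)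
    (hinv : ∀ K, invKey (invKey K) = K)
    (A B : agent) (n : ℕ) (L M : msg) (i : ℕ)
    (hL : L ∈ valid invKey pubK A n B)
    (hlen : i + 1 < lenm L)
    (hrepl : repl L (i + 1) M ∈ valid invKey pubK A n B) :
    M = ith L (i + 1) := by
  have hunchanged : repl L (i + 1) M = L :=
    eq_of_mem_valid_of_headm_eq hrepl hL (headm_repl_succ L i M)
  calc
    M = ith (repl L (i + 1) M) (i + 1) := (ith_repl_self M hlen).symm
    _ = ith L (i + 1) := by rw [hunchanged]
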